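/- arXiv:math/9607229 — 2 statements merged into one kernel-verified Lean document; each statement's English description precedes it below -/
import Mathlib

section
/- Let M be a finite nonempty meet-semilattice and t : (Fin m → M) → M a ⊓-homomorphism. Then there is an equivalence relation s on Fin m whose quotient has at most (Fintype.card M) ^ (Fintype.card M) elements, such that for every x : Fin m → M, t x = t (fun i => the infimum of x j over all j equivalent to i under s) (the infimum is a Finset.inf' over the s-class of i, which contains i and hence is nonempty). -/
/-!
Every value `p` of a `⊓`-homomorphism `t : (ι → M) → N` is attained at a least tuple, the meet of
the fibre over `p`. Identify two coordinates when all these least tuples agree on them; a class is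
then recorded by a function from the values of `t` to `M`. Replacing the entries of `x` by their
meets over the classes keeps the tuple above the least one with value `t x`, since that tuple is
below `x` and constant on classes, so `t x` does not change.
-/

section LeastPreimage

variable {α β : Type*} [SemilatticeInf α] [WellFoundedLT α]

theorem exists_isLeast_of_infClosed {s : Set α} (hs : InfClosed s) (hne : s.Nonempty) :
    ∃ a, IsLeast s a := by
  obtain ⟨a, ha⟩ := exists_minimal_of_wellFoundedLT (· ∈ s) hne
  exact ⟨a, hs.codirectedOn.minimal_iff_isLeast.mp ha⟩

variable [SemilatticeInf β] (f : InfHom α β)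

theorem exists_isLeast_fiber (p : Set.range f) : ∃ a, IsLeast (f ⁻¹' {p.1}) a :=
  exists_isLeast_of_infClosed (infClosed_singleton.preimage f) p.2

/-- The least element that `f` maps to `p`. Restricting `p` to the range of `f` avoids a junk value
on empty fibres. -/
noncomputable def leastPreimage (p : Set.range f) : α :=
  (exists_isLeast_fiber f p).choose

theorem isLeast_leastPreimage (p : Set.range f) : IsLeast (f ⁻¹' {p.1}) (leastPreimage f p) :=
  (exists_isLeast_fiber f p).choose_spec

theorem map_leastPreimage (p : Set.range f) : f (leastPreimage f p) = p :=
  (isLeast_leastPreimage f p).1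

theorem leastPreimage_map_le (x : α) : leastPreimage f ⟨f x, x, rfl⟩ ≤ x :=
  (isLeast_leastPreimage f ⟨f x, x, rfl⟩).2 rfl

end LeastPreimage

section ClassInf

variable {ι M : Type*} [Fintype ι] [SemilatticeInf M] (s : Setoid ι)

open scoped Classical in
/-- The tuple obtained from `x` by replacing each entry with the meet of the entries of `x` over
its `s`-class. -/
noncomputable def classInf (x : ι → M) (i : ι) : M :=
  (Finset.univ.filter fun j ↦ s.r i j).inf'
    ⟨i, Finset.mem_filter.mpr ⟨Finset.mem_univ i, s.iseqv.refl i⟩⟩ x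

variable {s}

theorem le_classInf_apply_iff {x : ι → M} {i : ι} {a : M} :
    a ≤ classInf s x i ↔ ∀ j, s i j → a ≤ x j :=
  (Finset.le_inf'_iff _ _).trans <| by simp only [Finset.mem_filter_univ]

theorem classInf_le (x : ι → M) : classInf s x ≤ x :=
  fun i ↦ le_classInf_apply_iff.mp le_rfl i (s.refl i)

theorem le_classInf {x y : ι → M} (hs : s ≤ Setoid.ker y) (hyx : y ≤ x) : y ≤ classInf s x := by
  refine fun i ↦ le_classInf_apply_iff.mpr fun j hij ↦ ?_
  have hy : y i = y j := hs hij
  exact hy.trans_le (hyx j)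

end ClassInf

section CoordinateSetoid

variable {ι M N : Type*} [Fintype ι] [SemilatticeInf M] [SemilatticeInf N]

/-- Coordinates are equivalent when every least preimage under `t` takes the same value at both.
These classes are the blocks of variables that may be identified in `t`. -/
noncomputable def coordinateSetoid [WellFoundedLT M] (t : InfHom (ι → M) N) : Setoid ι :=
  Setoid.ker fun i p ↦ leastPreimage t p i

theorem coordinateSetoid_le_ker [WellFoundedLT M] (t : InfHom (ι → M) N) (p : Set.range t) :
    coordinateSetoid t ≤ Setoid.ker (leastPreimage t p) :=
  fun _ _ hij ↦ congrFun hij p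

theorem map_classInf_coordinateSetoid [WellFoundedLT M] (t : InfHom (ι → M) N) (x : ι → M) :
    t (classInf (coordinateSetoid t) x) = t x := by
  set p : Set.range t := ⟨t x, x, rfl⟩
  have hle : leastPreimage t p ≤ classInf (coordinateSetoid t) x :=
    le_classInf (coordinateSetoid_le_ker t p) (leastPreimage_map_le t x)
  refine le_antisymm (OrderHomClass.mono t (classInf_le x)) ?_
  calc
    t x = t (leastPreimage t p) := (map_leastPreimage t p).symm
    _ ≤ t (classInf (coordinateSetoid t) x) := OrderHomClass.mono t hle

theorem card_quotient_coordinateSetoid_le [Finite M] (t : InfHom (ι → M) N) :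
    Nat.card (Quotient (coordinateSetoid t)) ≤ Nat.card M ^ Nat.card (Set.range t) := by
  rw [← Nat.card_fun]
  exact Nat.card_le_card_of_injective _ (Setoid.kerLift_injective _)

end CoordinateSetoid

theorem stmt_11_general {ι M N : Type*} [Fintype ι] [SemilatticeInf M] [Finite M]
    [SemilatticeInf N] (t : InfHom (ι → M) N) :
    ∃ s : Setoid ι, Nat.card (Quotient s) ≤ Nat.card M ^ Nat.card (Set.range t) ∧
      ∀ x, t x = t (classInf s x) :=
  ⟨coordinateSetoid t, card_quotient_coordinateSetoid_le t,
    fun x ↦ (map_classInf_coordinateSetoid t x).symm⟩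

open scoped Classical in
/-- Lemma 4.1: a ⊓-homomorphism on a finite meet-semilattice factors, up to
identifying each block of a partition with the meet of its variables, through an operation
of arity at most |M|^|M|. -/
theorem stmt_11 {M : Type*} [SemilatticeInf M] [Fintype M] [Nonempty M] {m : ℕ}
    (t : (Fin m → M) → M)
    (ht : ∀ x y : Fin m → M, t (fun i => x i ⊓ y i) = t x ⊓ t y) :
    ∃ s : Setoid (Fin m),
      Nat.card (Quotient s) ≤ Fintype.card M ^ Fintype.card M ∧
      ∀ x : Fin m → M,
        t x = t (fun i => (Finset.univ.filter (fun j => s.r i j)).inf'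
          ⟨i, Finset.mem_filter.mpr ⟨Finset.mem_univ i, s.iseqv.refl i⟩⟩ x) := by
  obtain ⟨s, hcard, hmap⟩ := stmt_11_general (⟨t, ht⟩ : InfHom (Fin m → M) M)
  refine ⟨s, hcard.trans ?_, hmap⟩
  rw [← Nat.card_eq_fintype_card]
  exact Nat.pow_le_pow_right Nat.card_pos (Finite.card_subtype_le _)
end

section
/- Let M be a meet-semilattice with a top element ⊤, and let t : M → M → M be idempotent (t x x = x) and compatible with ⊓ (t (a ⊓ b) (c ⊓ d) = t a c ⊓ t b d for all a, b, c, d). Then for all x, y ∈ M: (1) t x y = t x ⊤ ⊓ t ⊤ y; (2) x ≤ t x ⊤ and x ≤ t ⊤ x; (3) the maps x ↦ t x ⊤ and y ↦ t ⊤ y are ⊓-endomorphisms: t (a ⊓ b) ⊤ = t a ⊤ ⊓ t b ⊤ and t ⊤ (a ⊓ b) = t ⊤ a ⊓ t ⊤ b. -/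
open Function

/-- A binary operation is compatible with `⊓` if, as a map out of the product `α × β`,
it preserves componentwise meets. -/
def InfCompatible {α β γ : Type*} [Min α] [Min β] [Min γ] (t : α → β → γ) : Prop :=
  ∀ a b c d, t (a ⊓ b) (c ⊓ d) = t a c ⊓ t b d

namespace InfCompatible

section Min

variable {α β γ : Type*} [Min γ] {t : α → β → γ}

theorem apply_inf_left [Min α] [SemilatticeInf β] (ht : InfCompatible t) (a b : α) (c : β) :
    t (a ⊓ b) c = t a c ⊓ t b c := by
  rw [← ht, inf_idem]

theorem apply_inf_right [SemilatticeInf α] [Min β] (ht : InfCompatible t) (a : α) (b c : β) :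
    t a (b ⊓ c) = t a b ⊓ t a c := by
  rw [← ht, inf_idem]

theorem apply_eq_apply_top_inf_top_apply [SemilatticeInf α] [OrderTop α] [SemilatticeInf β]
    [OrderTop β] (ht : InfCompatible t) (x : α) (y : β) : t x y = t x ⊤ ⊓ t ⊤ y :=
  calc
    t x y = t (x ⊓ ⊤) (⊤ ⊓ y) := by rw [inf_top_eq, top_inf_eq]
    _ = t x ⊤ ⊓ t ⊤ y := ht x ⊤ ⊤ y

end Min

theorem monotone_uncurry {α β γ : Type*} [SemilatticeInf α] [SemilatticeInf β] [SemilatticeInf γ]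
    {t : α → β → γ} (ht : InfCompatible t) : Monotone (uncurry t) :=
  .of_map_inf fun p q => ht p.1 q.1 p.2 q.2

end InfCompatible

theorem inf_le_apply_of_monotone_uncurry {α : Type*} [SemilatticeInf α] {t : α → α → α}
    (ht : Monotone (uncurry t)) (hdiag : ∀ x, x ≤ t x x) (x y : α) : x ⊓ y ≤ t x y :=
  calc
    x ⊓ y ≤ t (x ⊓ y) (x ⊓ y) := hdiag (x ⊓ y)
    _ ≤ t x y := ht (Prod.mk_le_mk.2 ⟨inf_le_left, inf_le_right⟩)

/-- decomposition step of Lemma 3.6: every binary idempotent operation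
compatible with ⊓ on a meet-semilattice with ⊤ has the form t(x,y) = α(x) ⊓ β(y) with
α, β increasing ⊓-endomorphisms. -/
theorem stmt_15 {M : Type*} [SemilatticeInf M] [OrderTop M]
    (t : M → M → M) (hid : ∀ x : M, t x x = x)
    (hc : ∀ a b c d : M, t (a ⊓ b) (c ⊓ d) = t a c ⊓ t b d) :
    (∀ x y : M, t x y = t x ⊤ ⊓ t ⊤ y) ∧
    (∀ x : M, x ≤ t x ⊤ ∧ x ≤ t ⊤ x) ∧
    (∀ a b : M, t (a ⊓ b) ⊤ = t a ⊤ ⊓ t b ⊤ ∧ t ⊤ (a ⊓ b) = t ⊤ a ⊓ t ⊤ b) := by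
  have ht : InfCompatible t := hc
  have inf_le_apply (x y : M) : x ⊓ y ≤ t x y :=
    inf_le_apply_of_monotone_uncurry ht.monotone_uncurry (fun z => (hid z).ge) x y
  refine ⟨ht.apply_eq_apply_top_inf_top_apply, fun x => ⟨?_, ?_⟩,
    fun a b => ⟨ht.apply_inf_left a b ⊤, ht.apply_inf_right ⊤ a b⟩⟩
  · simpa only [inf_top_eq] using inf_le_apply x ⊤
  · simpa only [top_inf_eq] using inf_le_apply ⊤ x
end
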